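/- For n ≥ 2k, the number of splits of the hypersimplex Δ(k,n) equals (k−1)(2^{n−1} − (n+1)) − Σ_{i=2}^{k−1} (k−i)·C(n,i). -/

import Mathlib

open scoped Classical

section Subdivision

variable {E : Type*} [AddCommGroup E] [Module ℝ E]

/-- A polytope: the convex hull of a finite set of points. -/
def IsPolytope (P : Set E) : Prop := ∃ s : Finset E, P = convexHull ℝ (s : Set E)

/-- `F` is a face of `C`: a convex extreme subset. -/
def IsFaceOf (F C : Set E) : Prop := IsExtreme ℝ C F ∧ Convex ℝ F

/-- A polytopal subdivision of a polytope `P`: a finite collection of nonempty polytopes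
(cells), closed under taking (nonempty) faces, covering `P`, such that any two cells meet
in a common (possibly empty) face, and such that all vertices of cells are vertices of `P`. -/
structure IsSubdivision (P : Set E) (S : Set (Set E)) : Prop where
  finite : S.Finite
  nonempty_cell : ∀ C ∈ S, C.Nonempty
  poly : ∀ C ∈ S, IsPolytope C
  face_closed : ∀ C ∈ S, ∀ F, IsFaceOf F C → F.Nonempty → F ∈ S
  cover : ⋃₀ S = P
  inter_face : ∀ C ∈ S, ∀ D ∈ S, IsFaceOf (C ∩ D) C
  vertices : ∀ C ∈ S, ∀ x ∈ Set.extremePoints ℝ C, x ∈ Set.extremePoints ℝ P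

/-- A maximal cell of a collection of cells. -/
def MaximalCell (S : Set (Set E)) (C : Set E) : Prop :=
  C ∈ S ∧ ∀ D ∈ S, C ⊆ D → D = C

/-- The (relative) boundary of a polytope: the union of its proper faces. -/
def relBoundary (P : Set E) : Set E := ⋃₀ {F | IsFaceOf F P ∧ F ≠ P}

/-- The restriction `Σ|_{P'} = {S ∩ P' : S ∈ Σ}` of a subdivision to a subpolytope. -/
def restrictSubdiv (S : Set (Set E)) (P' : Set E) : Set (Set E) := (fun C => C ∩ P') '' S

/-- `P'` is a subpolytope of `P`: the convex hull of a subset of the vertices of `P`. -/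
def IsSubpolytope (P' P : Set E) : Prop :=
  ∃ W : Set E, W ⊆ Set.extremePoints ℝ P ∧ P' = convexHull ℝ W

/-- The tight-spans of `(P, S)` and `(P', S')` are isomorphic as posets: there is a
bijection between the interior cells (those not contained in the boundary) which is an
isomorphism for the partial order by reverse inclusion. -/
def TightSpanIso (P : Set E) (S : Set (Set E)) (P' : Set E) (S' : Set (Set E)) : Prop :=
  ∃ e : {C : Set E // C ∈ S ∧ ¬ C ⊆ relBoundary P} ≃
        {C : Set E // C ∈ S' ∧ ¬ C ⊆ relBoundary P'},
    ∀ C D, C.1 ⊆ D.1 ↔ (e C).1 ⊆ (e D).1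

/-- `S'` coarsens `S`: every cell of `S` is contained in some cell of `S'`. -/
def Coarsens (S S' : Set (Set E)) : Prop := ∀ C ∈ S, ∃ D ∈ S', C ⊆ D

/-- The trivial subdivision of a polytope: its collection of nonempty faces. -/
def trivialSubdiv (P : Set E) : Set (Set E) := {F | IsFaceOf F P ∧ F.Nonempty}

/-- A coarsest (non-trivial) subdivision: a non-trivial subdivision whose only proper
coarsening is the trivial subdivision. -/
def IsCoarsest (P : Set E) (S : Set (Set E)) : Prop :=
  IsSubdivision P S ∧ S ≠ trivialSubdiv P ∧
    ∀ S', IsSubdivision P S' → Coarsens S S' → S' ≠ S → S' = trivialSubdiv P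

end Subdivision

/-- The 0/1 indicator vector of a subset of `[n]`. -/
noncomputable def indicatorVec {n : ℕ} (B : Set (Fin n)) : Fin n → ℝ :=
  fun i => if i ∈ B then 1 else 0

/-- The hypersimplex `Δ(k,n)`. -/
noncomputable def hypersimplex (k n : ℕ) : Set (Fin n → ℝ) :=
  convexHull ℝ {x | ∃ σ : Finset (Fin n), σ.card = k ∧ x = indicatorVec (↑σ : Set (Fin n))}

/-- A split of a polytope `P`: a polytopal subdivision with exactly two maximal cells. -/
def IsSplit {E : Type*} [AddCommGroup E] [Module ℝ E] (P : Set E) (S : Set (Set E)) : Prop :=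
  IsSubdivision P S ∧ {C | MaximalCell S C}.ncard = 2

/-!
A split of a polytope `P` amounts to a hyperplane which cuts `P` in two but passes through the
interior of no edge of `P`: two maximal cells are separated by a hyperplane through their common
face, and both halves must have their vertices among those of `P`.

The edges of `Δ(k,n)` join `k`-sets `σ` and `σ - i + j`. Let `∑ c i * x i = u` be a split
hyperplane. If a `k`-set of weight exactly `u` admitted an exchange increasing the weight and one
decreasing it that had an element in common, then combining them would give an edge crossing the
hyperplane. Hence `c` takes only two values, and modulo the equation `∑ x i = k` the hyperplane
becomes `∑ i ∈ A, x i = μ` with `μ` an integer. The pair `(A, μ)` is determined up to passing to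
`(Aᶜ, k - μ)`. For a given `μ` the subsets `A` which do not occur are those with `|A| ≤ μ` and,
disjointly, those with `|Aᶜ| ≤ k - μ`; summing over `1 ≤ μ ≤ k - 1` and halving gives the formula.
-/

section Faces

variable {E : Type*} [AddCommGroup E] [Module ℝ E]

theorem IsFaceOf.trans {C F G : Set E} (hF : IsFaceOf F C) (hG : IsFaceOf G F) : IsFaceOf G C :=
  ⟨hF.1.trans hG.1, hG.2⟩

theorem IsFaceOf.eq_convexHull {V F : Set E} (h : IsFaceOf F (convexHull ℝ V)) :
    F = convexHull ℝ (V ∩ F) := by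
  refine subset_antisymm ?_ (convexHull_min Set.inter_subset_right h.2)
  have key : convexHull ℝ V ⊆ {x | x ∈ convexHull ℝ V ∧ (x ∈ F → x ∈ convexHull ℝ (V ∩ F))} := by
    refine convexHull_min (fun v hv => ⟨subset_convexHull ℝ V hv,
      fun hF => subset_convexHull ℝ _ ⟨hv, hF⟩⟩) ?_
    rw [convex_iff_openSegment_subset]
    intro x hx y hy z hz
    refine ⟨(convex_convexHull ℝ V).openSegment_subset hx.1 hy.1 hz, fun hzF => ?_⟩
    exact (convex_convexHull ℝ _).openSegment_subset
      (hx.2 (h.1.left_mem_of_mem_openSegment hx.1 hy.1 hzF hz))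
      (hy.2 (h.1.right_mem_of_mem_openSegment hx.1 hy.1 hzF hz)) hz
  exact fun x hx => (key (h.1.subset hx)).2 hx

theorem IsFaceOf.isPolytope {C F : Set E} (hF : IsFaceOf F C) (hC : IsPolytope C) :
    IsPolytope F := by
  obtain ⟨s, rfl⟩ := hC
  refine ⟨s.filter (· ∈ F), ?_⟩
  rw [hF.eq_convexHull]
  congr 1
  ext x
  simp only [Set.mem_inter_iff, Finset.mem_coe, Finset.coe_filter, Set.mem_ofPred_eq,
    ← hF.eq_convexHull]

theorem IsPolytope.finite_faces {C : Set E} (hC : IsPolytope C) : {F | IsFaceOf F C}.Finite := by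
  obtain ⟨s, rfl⟩ := hC
  refine (s.finite_toSet.finite_subsets.image (convexHull ℝ)).subset fun F hF => ?_
  exact ⟨_, Set.inter_subset_left, (IsFaceOf.eq_convexHull hF).symm⟩

theorem IsPolytope.finite_extremePoints {C : Set E} (hC : IsPolytope C) :
    (C.extremePoints ℝ).Finite := by
  obtain ⟨s, rfl⟩ := hC
  exact s.finite_toSet.subset extremePoints_convexHull_subset

theorem IsPolytope.convex {C : Set E} (hC : IsPolytope C) : Convex ℝ C := by
  obtain ⟨s, rfl⟩ := hC
  exact convex_convexHull ℝ _

theorem IsPolytope.isFaceOf_refl {C : Set E} (hC : IsPolytope C) : IsFaceOf C C :=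
  ⟨IsExtreme.rfl, hC.convex⟩

end Faces

section Polytopes

variable {E : Type*} [AddCommGroup E] [Module ℝ E] [TopologicalSpace E]
  [IsTopologicalAddGroup E] [ContinuousSMul ℝ E]

theorem IsPolytope.isCompact {C : Set E} (hC : IsPolytope C) : IsCompact C := by
  obtain ⟨s, rfl⟩ := hC
  exact s.finite_toSet.isCompact_convexHull ℝ

theorem eq_convexHull_extremePoints_of_finite [T2Space E] [LocallyConvexSpace ℝ E] {C : Set E}
    (hC : IsCompact C) (hconv : Convex ℝ C) (hfin : (C.extremePoints ℝ).Finite) :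
    C = convexHull ℝ (C.extremePoints ℝ) := by
  rw [← (hfin.isClosed_convexHull ℝ).closure_eq, closure_convexHull_extremePoints hC hconv]

theorem isPolytope_of_finite_extremePoints [T2Space E] [LocallyConvexSpace ℝ E] {C : Set E}
    (hC : IsCompact C) (hconv : Convex ℝ C) (hfin : (C.extremePoints ℝ).Finite) :
    IsPolytope C :=
  ⟨hfin.toFinset, by
    rw [hfin.coe_toFinset]; exact eq_convexHull_extremePoints_of_finite hC hconv hfin⟩

end Polytopes

section Gluing

variable {E : Type*} [AddCommGroup E] [Module ℝ E]

/-- The nonempty faces of either of two sets. -/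
def facesOfPair (C D : Set E) : Set (Set E) :=
  {F | F.Nonempty ∧ (IsFaceOf F C ∨ IsFaceOf F D)}

theorem facesOfPair_comm (C D : Set E) : facesOfPair C D = facesOfPair D C := by
  ext F
  simp only [facesOfPair, Set.mem_ofPred_eq, or_comm]

theorem isFaceOf_inter_of_isFaceOf {C D F G : Set E} (hCD : IsFaceOf (C ∩ D) C)
    (hDC : IsFaceOf (C ∩ D) D) (hF : IsFaceOf F C) (hG : IsFaceOf G D) : IsFaceOf (F ∩ G) F := by
  have h1 : IsExtreme ℝ D (G ∩ (C ∩ D)) := hG.1.inter hDC.1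
  have h2 : IsExtreme ℝ C (G ∩ (C ∩ D)) :=
    hCD.1.trans (h1.mono Set.inter_subset_right Set.inter_subset_right)
  have h3 : F ∩ G = F ∩ (G ∩ (C ∩ D)) := by
    ext x
    have := @hF.1.subset x
    have := @hG.1.subset x
    simp only [Set.mem_inter_iff]
    tauto
  refine ⟨?_, hF.2.inter hG.2⟩
  rw [h3]
  exact (hF.1.inter h2).mono hF.1.subset Set.inter_subset_left

theorem isFaceOf_inter_of_isFaceOf_same {C F G : Set E} (hF : IsFaceOf F C)
    (hG : IsFaceOf G C) : IsFaceOf (F ∩ G) F :=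
  ⟨(hF.1.inter hG.1).mono hF.1.subset Set.inter_subset_left, hF.2.inter hG.2⟩

theorem isSubdivision_facesOfPair {P C D : Set E} (hC : IsPolytope C) (hD : IsPolytope D)
    (hP : C ∪ D = P) (hCD : IsFaceOf (C ∩ D) C) (hDC : IsFaceOf (C ∩ D) D)
    (hvC : Set.extremePoints ℝ C ⊆ Set.extremePoints ℝ P)
    (hvD : Set.extremePoints ℝ D ⊆ Set.extremePoints ℝ P) :
    IsSubdivision P (facesOfPair C D) where
  finite := (hC.finite_faces.union hD.finite_faces).subset fun _ h => h.2
  nonempty_cell := fun _ h => h.1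
  poly := fun _ h => h.2.elim (fun h => h.isPolytope hC) fun h => h.isPolytope hD
  face_closed := fun _ h _ hF hne => ⟨hne, h.2.imp (fun h => h.trans hF) fun h => h.trans hF⟩
  cover := by
    subst hP
    refine subset_antisymm ?_ ?_
    · rintro x ⟨F, ⟨-, h⟩, hx⟩
      exact h.imp (fun h => h.1.subset hx) fun h => h.1.subset hx
    · rintro x (hx | hx)
      · exact ⟨C, ⟨⟨x, hx⟩, Or.inl hC.isFaceOf_refl⟩, hx⟩
      · exact ⟨D, ⟨⟨x, hx⟩, Or.inr hD.isFaceOf_refl⟩, hx⟩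
  inter_face := by
    rintro F ⟨-, hF | hF⟩ G ⟨-, hG | hG⟩
    · exact isFaceOf_inter_of_isFaceOf_same hF hG
    · exact isFaceOf_inter_of_isFaceOf hCD hDC hF hG
    · rw [Set.inter_comm C D] at hCD hDC
      exact isFaceOf_inter_of_isFaceOf hDC hCD hF hG
    · exact isFaceOf_inter_of_isFaceOf_same hF hG
  vertices := fun _ h _ hx => h.2.elim
    (fun h => hvC (h.1.extremePoints_subset_extremePoints hx))
    fun h => hvD (h.1.extremePoints_subset_extremePoints hx)

theorem maximalCell_facesOfPair_left {C D : Set E} (hC : IsPolytope C) (hne : C.Nonempty)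
    (hCD : ¬ C ⊆ D) : MaximalCell (facesOfPair C D) C :=
  ⟨⟨hne, Or.inl hC.isFaceOf_refl⟩, fun _ hF hCF => hF.2.elim
    (fun h => subset_antisymm h.1.subset hCF) fun h => absurd (hCF.trans h.1.subset) hCD⟩

theorem setOf_maximalCell_facesOfPair {C D : Set E} (hC : IsPolytope C) (hD : IsPolytope D)
    (hCD : ¬ C ⊆ D) (hDC : ¬ D ⊆ C) : {F | MaximalCell (facesOfPair C D) F} = {C, D} := by
  have hCne : C.Nonempty := Set.nonempty_iff_ne_empty.2 fun h => hCD (h ▸ Set.empty_subset D)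
  have hDne : D.Nonempty := Set.nonempty_iff_ne_empty.2 fun h => hDC (h ▸ Set.empty_subset C)
  have hCm := maximalCell_facesOfPair_left hC hCne hCD
  have hDm := maximalCell_facesOfPair_left hD hDne hDC
  rw [facesOfPair_comm] at hDm
  refine Set.Subset.antisymm (fun F hF => ?_) ?_
  · rcases hF.1.2 with h | h
    · exact Or.inl (hF.2 C hCm.1 h.1.subset).symm
    · exact Or.inr (hF.2 D hDm.1 h.1.subset).symm
  · rintro F (rfl | rfl)
    exacts [hCm, hDm]

theorem isSplit_facesOfPair {P C D : Set E} (hC : IsPolytope C) (hD : IsPolytope D)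
    (hP : C ∪ D = P) (hCD : IsFaceOf (C ∩ D) C) (hDC : IsFaceOf (C ∩ D) D)
    (hvC : Set.extremePoints ℝ C ⊆ Set.extremePoints ℝ P)
    (hvD : Set.extremePoints ℝ D ⊆ Set.extremePoints ℝ P)
    (hnCD : ¬ C ⊆ D) (hnDC : ¬ D ⊆ C) : IsSplit P (facesOfPair C D) := by
  refine ⟨isSubdivision_facesOfPair hC hD hP hCD hDC hvC hvD, ?_⟩
  rw [setOf_maximalCell_facesOfPair hC hD hnCD hnDC]
  exact Set.ncard_pair fun h => hnCD h.subset

theorem IsSplit.exists_eq_facesOfPair {P : Set E} {S : Set (Set E)} (hS : IsSplit P S) :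
    ∃ C D, C ∈ S ∧ D ∈ S ∧ ¬ C ⊆ D ∧ ¬ D ⊆ C ∧ C ∪ D = P ∧ S = facesOfPair C D := by
  obtain ⟨hS, hcard⟩ := hS
  obtain ⟨C, D, hne, hset⟩ := Set.ncard_eq_two.1 hcard
  have hC : MaximalCell S C := by
    change C ∈ {F | MaximalCell S F}
    simp [hset]
  have hD : MaximalCell S D := by
    change D ∈ {F | MaximalCell S F}
    simp [hset]
  have hmax : ∀ F ∈ S, F ⊆ C ∨ F ⊆ D := by
    intro F hF
    obtain ⟨G, hFG, hG⟩ := hS.finite.exists_le_maximal hF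
    have hGm : G ∈ {F | MaximalCell S F} :=
      ⟨hG.1, fun H hH hGH => subset_antisymm (hG.2 hH hGH) hGH⟩
    rw [hset] at hGm
    rcases hGm with rfl | rfl
    · exact Or.inl hFG
    · exact Or.inr hFG
  refine ⟨C, D, hC.1, hD.1, fun h => hne (hC.2 D hD.1 h).symm, fun h => hne (hD.2 C hC.1 h), ?_, ?_⟩
  · rw [← hS.cover]
    refine subset_antisymm (Set.union_subset (Set.subset_sUnion_of_mem hC.1)
      (Set.subset_sUnion_of_mem hD.1)) (Set.sUnion_subset fun F hF => ?_)
    exact (hmax F hF).elim (fun h => h.trans Set.subset_union_left)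
      fun h => h.trans Set.subset_union_right
  · ext F
    refine ⟨fun hF => ⟨hS.nonempty_cell F hF, ?_⟩, ?_⟩
    · refine (hmax F hF).imp (fun h => ?_) fun h => ?_
      · simpa [Set.inter_eq_right.2 h] using hS.inter_face C hC.1 F hF
      · simpa [Set.inter_eq_right.2 h] using hS.inter_face D hD.1 F hF
    · rintro ⟨hne, h | h⟩
      exacts [hS.face_closed C hC.1 F h hne, hS.face_closed D hD.1 F h hne]

end Gluing

section ConeSeparation

variable {E : Type*} [AddCommGroup E] [Module ℝ E]

theorem mem_hull_iff_exists_smul_mem_convexHull {s : Set E} (hs : s.Nonempty) {x : E} :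
    x ∈ PointedCone.hull ℝ s ↔ ∃ r : ℝ, 0 ≤ r ∧ ∃ y ∈ convexHull ℝ s, r • y = x := by
  have hconv := convex_convexHull ℝ s
  constructor
  · intro hx
    induction hx using Submodule.span_induction with
    | mem x hx => exact ⟨1, zero_le_one, x, subset_convexHull ℝ s hx, one_smul ℝ x⟩
    | zero =>
      obtain ⟨y, hy⟩ := hs
      exact ⟨0, le_rfl, y, subset_convexHull ℝ s hy, zero_smul ℝ y⟩
    | add _ _ _ _ hx hy =>
      obtain ⟨a, ha, x, hx, rfl⟩ := hx
      obtain ⟨b, hb, y, hy, rfl⟩ := hy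
      obtain ⟨z, hz, h⟩ := hconv.exists_mem_add_smul_eq hx hy ha hb
      exact ⟨a + b, add_nonneg ha hb, z, hz, h⟩
    | smul c _ _ hx =>
      obtain ⟨a, ha, x, hx, rfl⟩ := hx
      exact ⟨c * a, mul_nonneg c.2 ha, x, hx, mul_smul (c : ℝ) a x⟩
  · rintro ⟨r, hr, y, hy, rfl⟩
    exact Submodule.smul_mem _ (⟨r, hr⟩ : NNReal)
      (convexHull_min PointedCone.subset_hull (PointedCone.convex _) hy)

theorem convex_setOf_mem_and_neg_notMem (C : PointedCone ℝ E) :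
    Convex ℝ {x | x ∈ C ∧ -x ∉ C} := by
  rw [convex_iff_forall_pos]
  rintro x ⟨hx, hnx⟩ y ⟨hy, -⟩ a b ha hb -
  refine ⟨C.add_mem (C.smul_mem ha.le hx) (C.smul_mem hb.le hy), fun h => hnx ?_⟩
  have key := C.smul_mem (inv_nonneg.2 ha.le) (C.add_mem h (C.smul_mem hb.le hy))
  rwa [neg_add, neg_add_cancel_right, smul_neg, inv_smul_smul₀ ha.ne'] at key

variable [TopologicalSpace E] [T2Space E] [IsTopologicalAddGroup E] [ContinuousSMul ℝ E]

theorem isClosed_lineal_hull {s : Set E} (hs : s.Finite) :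
    IsClosed ((PointedCone.hull ℝ s).lineal : Set E) := by
  have := FiniteDimensional.span_of_finite ℝ hs
  have hle : (PointedCone.hull ℝ s).lineal ≤ Submodule.span ℝ s :=
    fun x hx => PointedCone.hull_le_span ℝ s hx.1
  have := Submodule.finiteDimensional_of_le hle
  exact Submodule.closed_of_finiteDimensional _

theorem exists_forall_mem_hull_pos_or_mem_lineal [LocallyConvexSpace ℝ E] {s : Set E}
    (hs : s.Finite) : ∃ f : StrongDual ℝ E, ∀ x ∈ PointedCone.hull ℝ s,
      0 < f x ∨ x ∈ (PointedCone.hull ℝ s).lineal ∧ f x = 0 := by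
  set C := PointedCone.hull ℝ s
  have hdisj : Disjoint (convexHull ℝ {x ∈ s | -x ∉ C}) (C.lineal : Set E) :=
    Set.disjoint_left.2 fun x hx hxL => (convexHull_min (fun y (hy : y ∈ s ∧ -y ∉ C) =>
      And.intro (PointedCone.subset_hull hy.1) hy.2) (convex_setOf_mem_and_neg_notMem C) hx).2 hxL.2
  obtain ⟨f, u, v, hfs, huv, hfL⟩ := geometric_hahn_banach_compact_closed (convex_convexHull ℝ _)
    ((hs.subset (Set.sep_subset _ _)).isCompact_convexHull ℝ) C.lineal.convex
    (isClosed_lineal_hull hs) hdisj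
  have hv : v < 0 := by simpa using hfL 0 C.lineal.zero_mem
  have hf0 : ∀ x ∈ C.lineal, f x = 0 := fun x hx => by
    by_contra hne
    simpa [hne] using hfL ((v / f x) • x) (C.lineal.smul_mem _ hx)
  refine ⟨-f, fun x hx => ?_⟩
  induction hx using Submodule.span_induction with
  | mem x hx =>
    by_cases hxC : -x ∈ C
    · have hxL : x ∈ C.lineal := ⟨PointedCone.subset_hull hx, hxC⟩
      exact Or.inr ⟨hxL, by simp [hf0 x hxL]⟩
    · have := hfs x (subset_convexHull ℝ _ ⟨hx, hxC⟩)
      exact Or.inl (by simpa using by linarith)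
  | zero => exact Or.inr ⟨C.lineal.zero_mem, map_zero _⟩
  | add x y _ _ hx hy =>
    rw [map_add]
    rcases hx with hx | ⟨hxL, hx⟩ <;> rcases hy with hy | ⟨hyL, hy⟩
    · exact Or.inl (add_pos hx hy)
    · exact Or.inl (by rwa [hy, add_zero])
    · exact Or.inl (by rwa [hx, zero_add])
    · exact Or.inr ⟨C.lineal.add_mem hxL hyL, by rw [hx, hy, add_zero]⟩
  | smul c x _ hx =>
    have hsmul : (-f) (c • x) = c * (-f) x := map_smul (-f) (c : ℝ) x
    rw [hsmul]
    rcases hx with hx | ⟨hxL, hx⟩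
    · obtain rfl | hc := eq_zero_or_pos c
      · exact Or.inr (by simp)
      · exact Or.inl (mul_pos hc hx)
    · exact Or.inr ⟨C.lineal.smul_mem (c : ℝ) hxL, by rw [hx, mul_zero]⟩

end ConeSeparation

section Separation

variable {E : Type*} [AddCommGroup E] [Module ℝ E]

theorem mem_inter_of_sub_eq_smul_sub {C D : Set E} (hC : Convex ℝ C) (hD : Convex ℝ D)
    (hCD : IsExtreme ℝ C (C ∩ D)) (hDC : IsExtreme ℝ D (C ∩ D)) {c c' d d' : E} (hc : c ∈ C)
    (hc' : c' ∈ C) (hd : d ∈ D) (hd' : d' ∈ D) {r : ℝ} (hr : 0 ≤ r)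
    (h : c - d = r • (d' - c')) : c ∈ C ∩ D ∧ d ∈ C ∩ D := by
  obtain rfl | hr := hr.eq_or_lt
  · obtain rfl : c = d := by simpa [sub_eq_zero] using h
    exact ⟨⟨hc, hd⟩, hc, hd⟩
  -- The point `z` has the same expression in `d` and `d'`, hence lies in `C ∩ D`.
  set z := (1 / (1 + r)) • c + (r / (1 + r)) • c' with hz
  have hz' : z = (1 / (1 + r)) • d + (r / (1 + r)) • d' := by
    rw [hz, eq_add_of_sub_eq h]
    module
  have hsum : 1 / (1 + r) + r / (1 + r) = 1 := by field_simp
  have hzc : z ∈ openSegment ℝ c c' := ⟨_, _, by positivity, by positivity, hsum, rfl⟩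
  have hzd : z ∈ openSegment ℝ d d' := ⟨_, _, by positivity, by positivity, hsum, hz'.symm⟩
  have hzCD : z ∈ C ∩ D := ⟨hC.openSegment_subset hc hc' hzc, hD.openSegment_subset hd hd' hzd⟩
  exact ⟨hCD.left_mem_of_mem_openSegment hc hc' hzCD hzc,
    hDC.left_mem_of_mem_openSegment hd hd' hzCD hzd⟩

variable [TopologicalSpace E] [T2Space E] [IsTopologicalAddGroup E] [ContinuousSMul ℝ E]
  [LocallyConvexSpace ℝ E]

open Pointwise in
theorem IsPolytope.exists_lt_or_mem_inter {C D : Set E} (hC : IsPolytope C)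
    (hD : IsPolytope D) (hCD : IsExtreme ℝ C (C ∩ D)) (hDC : IsExtreme ℝ D (C ∩ D)) :
    ∃ f : StrongDual ℝ E, ∀ c ∈ C, ∀ d ∈ D, f c < f d ∨ f c = f d ∧ c ∈ D ∧ d ∈ C := by
  obtain ⟨s, hs⟩ := id hC
  obtain ⟨t, ht⟩ := id hD
  have hsub : convexHull ℝ ((t : Set E) - (s : Set E)) = D - C := by rw [convexHull_sub, hs, ht]
  obtain ⟨f, hf⟩ := exists_forall_mem_hull_pos_or_mem_lineal (t.finite_toSet.sub s.finite_toSet)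
  refine ⟨f, fun c hc d hd => ?_⟩
  have hmem : d - c ∈ D - C := Set.sub_mem_sub hd hc
  have hne : ((t : Set E) - (s : Set E)).Nonempty := by
    rw [← convexHull_nonempty_iff (𝕜 := ℝ), hsub]
    exact ⟨_, hmem⟩
  have hhull : d - c ∈ PointedCone.hull ℝ ((t : Set E) - (s : Set E)) :=
    (mem_hull_iff_exists_smul_mem_convexHull hne).2
      ⟨1, zero_le_one, d - c, hsub ▸ hmem, one_smul ℝ _⟩
  refine (hf _ hhull).imp (fun h => by simpa using h) fun ⟨⟨_, hneg⟩, h⟩ => ?_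
  obtain ⟨r, hr, y, hy, hry⟩ := (mem_hull_iff_exists_smul_mem_convexHull hne).1 hneg
  rw [hsub] at hy
  obtain ⟨d', hd', c', hc', rfl⟩ := hy
  rw [neg_sub] at hry
  obtain ⟨hcCD, hdCD⟩ :=
    mem_inter_of_sub_eq_smul_sub hC.convex hD.convex hCD hDC hc hc' hd hd' hr hry.symm
  rw [map_sub, sub_eq_zero] at h
  exact ⟨h.symm, hcCD.2, hdCD.1⟩

theorem IsPolytope.exists_eq_inter_halfspaces {P C D : Set E} (hP : Convex ℝ P)
    (hC : IsPolytope C) (hD : IsPolytope D) (hCD : IsExtreme ℝ C (C ∩ D))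
    (hDC : IsExtreme ℝ D (C ∩ D)) (hCne : C.Nonempty) (hDne : D.Nonempty) (hCDP : C ∪ D = P) :
    ∃ (f : StrongDual ℝ E) (u : ℝ), C = P ∩ {x | f x ≤ u} ∧ D = P ∩ {x | u ≤ f x} := by
  subst hCDP
  obtain ⟨z, -, hzC, hzD⟩ := isPreconnected_closed_iff.1 hP.isPreconnected C D
    hC.isCompact.isClosed hD.isCompact.isClosed subset_rfl (hCne.mono fun x hx => ⟨Or.inl hx, hx⟩)
    (hDne.mono fun x hx => ⟨Or.inr hx, hx⟩)
  obtain ⟨f, hf⟩ := hC.exists_lt_or_mem_inter hD hCD hDC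
  have hfC : ∀ c ∈ C, f c < f z ∨ f c = f z ∧ c ∈ D := fun c hc =>
    (hf c hc z hzD).imp_right fun h => ⟨h.1, h.2.1⟩
  have hfD : ∀ d ∈ D, f z < f d ∨ f d = f z ∧ d ∈ C := fun d hd =>
    (hf z hzC d hd).imp_right fun h => ⟨h.1.symm, h.2.2⟩
  refine ⟨f, f z, ?_, ?_⟩ <;> ext x <;> constructor
  · exact fun hx => ⟨Or.inl hx, (hfC x hx).elim le_of_lt fun h => h.1.le⟩
  · rintro ⟨hx | hx, hle⟩
    exacts [hx, (hfD x hx).elim (fun h => absurd hle h.not_ge) And.right]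
  · exact fun hx => ⟨Or.inr hx, (hfD x hx).elim le_of_lt fun h => h.1.ge⟩
  · rintro ⟨hx | hx, hle⟩
    exacts [(hfC x hx).elim (fun h => absurd hle h.not_ge) And.right, hx]

end Separation

section SplitHyperplanes

variable {E : Type*} [AddCommGroup E] [Module ℝ E]

theorem isExtreme_setOf_eq_of_forall_le {C : Set E} {f : E →ₗ[ℝ] ℝ} {u : ℝ}
    (hC : ∀ x ∈ C, f x ≤ u) : IsExtreme ℝ C {x ∈ C | f x = u} := by
  refine ⟨Set.sep_subset _ _, fun x hx y hy z hz hzxy => ⟨hx, (hC x hx).antisymm ?_⟩⟩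
  obtain ⟨a, b, ha, hb, hab, rfl⟩ := hzxy
  have hz := hz.2
  simp only [map_add, map_smul, smul_eq_mul] at hz
  have hby := mul_le_mul_of_nonneg_left (hC y hy) hb.le
  refine le_of_mul_le_mul_left ?_ ha
  linear_combination hby - hz + u * hab

theorem isExtreme_setOf_eq_of_forall_ge {C : Set E} {f : E →ₗ[ℝ] ℝ} {u : ℝ}
    (hC : ∀ x ∈ C, u ≤ f x) : IsExtreme ℝ C {x ∈ C | f x = u} := by
  simpa only [LinearMap.neg_apply, neg_inj] using
    isExtreme_setOf_eq_of_forall_le (f := -f) fun x hx => neg_le_neg (hC x hx)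

variable [TopologicalSpace E]

/-- The subdivision of `P` induced by the hyperplane `f = u`: the nonempty faces of the
intersections of `P` with the two closed halfspaces. -/
def hyperplaneSubdivision (P : Set E) (f : StrongDual ℝ E) (u : ℝ) : Set (Set E) :=
  facesOfPair (P ∩ {x | f x ≤ u}) (P ∩ {x | u ≤ f x})

/-- The hyperplane `f = u` cuts `P` into two proper parts without creating new vertices. -/
structure IsSplitHyperplane (P : Set E) (f : StrongDual ℝ E) (u : ℝ) : Prop where
  exists_lt : ∃ x ∈ P, f x < u
  exists_gt : ∃ x ∈ P, u < f x
  extremePoints_le : (P ∩ {x | f x ≤ u}).extremePoints ℝ ⊆ P.extremePoints ℝ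
  extremePoints_ge : (P ∩ {x | u ≤ f x}).extremePoints ℝ ⊆ P.extremePoints ℝ

variable {P : Set E} {S : Set (Set E)} {f g : StrongDual ℝ E} {u v : ℝ}

theorem inter_le_inter_ge_eq :
    P ∩ {x | f x ≤ u} ∩ (P ∩ {x | u ≤ f x}) = {x ∈ P | f x = u} := by
  ext x
  simp only [Set.mem_inter_iff, Set.mem_ofPred_eq, le_antisymm_iff]
  tauto

theorem convex_inter_le (hP : Convex ℝ P) : Convex ℝ (P ∩ {x | f x ≤ u}) :=
  hP.inter (convex_halfSpace_le f.toLinearMap.isLinear u)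

theorem convex_inter_ge (hP : Convex ℝ P) : Convex ℝ (P ∩ {x | u ≤ f x}) :=
  hP.inter (convex_halfSpace_ge f.toLinearMap.isLinear u)

theorem hyperplaneSubdivision_eq_of_sub_eq_mul {r : ℝ} (hr : r ≠ 0)
    (h : ∀ x ∈ P, f x - u = r * (g x - v)) :
    hyperplaneSubdivision P f u = hyperplaneSubdivision P g v := by
  unfold hyperplaneSubdivision
  rcases hr.lt_or_gt with hr | hr
  · rw [facesOfPair_comm]
    congr 1 <;> ext x <;> refine and_congr_right fun hx => ?_ <;>
      rw [Set.mem_ofPred_eq, Set.mem_ofPred_eq] <;>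
      constructor <;> intro hle <;> nlinarith [h x hx]
  · congr 1 <;> ext x <;> refine and_congr_right fun hx => ?_ <;>
      rw [Set.mem_ofPred_eq, Set.mem_ofPred_eq] <;>
      constructor <;> intro hle <;> nlinarith [h x hx]

theorem isFaceOf_inter_le_inter_ge_left (hP : Convex ℝ P) :
    IsFaceOf (P ∩ {x | f x ≤ u} ∩ (P ∩ {x | u ≤ f x})) (P ∩ {x | f x ≤ u}) := by
  refine ⟨?_, (convex_inter_le hP).inter (convex_inter_ge hP)⟩
  convert isExtreme_setOf_eq_of_forall_le (f := f.toLinearMap) (C := P ∩ {x | f x ≤ u})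
    fun x hx => hx.2 using 1
  rw [inter_le_inter_ge_eq]
  ext x
  exact ⟨fun h => ⟨⟨h.1, h.2.le⟩, h.2⟩, fun h => ⟨h.1.1, h.2⟩⟩

theorem isFaceOf_inter_le_inter_ge_right (hP : Convex ℝ P) :
    IsFaceOf (P ∩ {x | f x ≤ u} ∩ (P ∩ {x | u ≤ f x})) (P ∩ {x | u ≤ f x}) := by
  refine ⟨?_, (convex_inter_le hP).inter (convex_inter_ge hP)⟩
  convert isExtreme_setOf_eq_of_forall_ge (f := f.toLinearMap) (C := P ∩ {x | u ≤ f x})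
    fun x hx => hx.2 using 1
  rw [inter_le_inter_ge_eq]
  ext x
  exact ⟨fun h => ⟨⟨h.1, h.2.ge⟩, h.2⟩, fun h => ⟨h.1.1, h.2⟩⟩

namespace IsSplitHyperplane

theorem not_inter_le_subset (h : IsSplitHyperplane P f u) :
    ¬ P ∩ {x | f x ≤ u} ⊆ P ∩ {x | u ≤ f x} := fun hsub =>
  let ⟨_, hx, hlt⟩ := h.exists_lt
  hlt.not_ge (hsub ⟨hx, hlt.le⟩).2

theorem not_inter_ge_subset (h : IsSplitHyperplane P f u) :
    ¬ P ∩ {x | u ≤ f x} ⊆ P ∩ {x | f x ≤ u} := fun hsub =>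
  let ⟨_, hx, hgt⟩ := h.exists_gt
  hgt.not_ge (hsub ⟨hx, hgt.le⟩).2

theorem le_of_isFaceOf_segment (h : IsSplitHyperplane P f u) {x y : E}
    (hxy : IsFaceOf (segment ℝ x y) P) (hx : u < f x) : u ≤ f y := by
  by_contra! hy
  have hinj : ∀ p ∈ segment ℝ x y, ∀ q ∈ segment ℝ x y, f p = f q → p = q := by
    simp only [segment_eq_image_lineMap]
    rintro _ ⟨s, -, rfl⟩ _ ⟨t, -, rfl⟩ hst
    have : (s - t) * (f y - f x) = 0 := by
      simp only [AffineMap.lineMap_apply_module', map_add, map_smul, map_sub, smul_eq_mul] at hst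
      linear_combination hst
    rw [(sub_eq_zero.1 ((mul_eq_zero.1 this).resolve_right (by linarith)))]
  obtain ⟨z, hz, hzu⟩ : ∃ z ∈ openSegment ℝ x y, f z = u := by
    have : u ∈ openSegment ℝ (f y) (f x) := by
      rw [openSegment_eq_Ioo (hy.trans hx)]
      exact ⟨hy, hx⟩
    rw [openSegment_symm] at this
    obtain ⟨a, b, ha, hb, hab, h⟩ := this
    exact ⟨_, ⟨a, b, ha, hb, hab, rfl⟩, by simpa using h⟩
  have hzs := openSegment_subset_segment ℝ x y hz
  have hxP := hxy.1.subset (left_mem_segment ℝ x y)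
  have hyP := hxy.1.subset (right_mem_segment ℝ x y)
  have hzext : z ∈ (P ∩ {x | u ≤ f x}).extremePoints ℝ := by
    refine ⟨⟨hxy.1.subset hzs, hzu.ge⟩, fun p hp q hq hpq => ?_⟩
    have hps := hxy.1.left_mem_of_mem_openSegment hp.1 hq.1 hzs hpq
    have hpu := (isExtreme_setOf_eq_of_forall_ge (f := f.toLinearMap) fun x hx => hx.2
      ).left_mem_of_mem_openSegment hp hq ⟨⟨hxy.1.subset hzs, hzu.ge⟩, hzu⟩ hpq
    exact hinj p hps z hzs (hpu.2.trans hzu.symm)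
  obtain rfl := (h.extremePoints_ge hzext).2 hxP hyP hz
  exact hx.ne' hzu

end IsSplitHyperplane

variable [T2Space E] [IsTopologicalAddGroup E] [ContinuousSMul ℝ E] [LocallyConvexSpace ℝ E]

theorem IsSplitHyperplane.isPolytope_inter_le (hP : IsPolytope P) (h : IsSplitHyperplane P f u) :
    IsPolytope (P ∩ {x | f x ≤ u}) :=
  isPolytope_of_finite_extremePoints
    (hP.isCompact.inter_right (isClosed_le f.continuous continuous_const))
    (convex_inter_le hP.convex) (hP.finite_extremePoints.subset h.extremePoints_le)

theorem IsSplitHyperplane.isPolytope_inter_ge (hP : IsPolytope P) (h : IsSplitHyperplane P f u) :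
    IsPolytope (P ∩ {x | u ≤ f x}) :=
  isPolytope_of_finite_extremePoints
    (hP.isCompact.inter_right (isClosed_le continuous_const f.continuous))
    (convex_inter_ge hP.convex) (hP.finite_extremePoints.subset h.extremePoints_ge)

theorem isSplit_iff_exists_isSplitHyperplane (hP : IsPolytope P) :
    IsSplit P S ↔ ∃ f u, IsSplitHyperplane P f u ∧ S = hyperplaneSubdivision P f u := by
  constructor
  · intro hS
    obtain ⟨C, D, hC, hD, hCD, hDC, hunion, rfl⟩ := hS.exists_eq_facesOfPair
    have hface := hS.1.inter_face D hD C hC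
    rw [Set.inter_comm] at hface
    obtain ⟨f, u, rfl, rfl⟩ := IsPolytope.exists_eq_inter_halfspaces hP.convex (hS.1.poly C hC)
      (hS.1.poly D hD) (hS.1.inter_face C hC D hD).1 hface.1 hC.1 hD.1 hunion
    obtain ⟨x, hx, hxD⟩ := Set.not_subset.1 hCD
    obtain ⟨y, hy, hyC⟩ := Set.not_subset.1 hDC
    exact ⟨f, u, ⟨⟨x, hx.1, lt_of_not_ge fun h => hxD ⟨hx.1, h⟩⟩,
      ⟨y, hy.1, lt_of_not_ge fun h => hyC ⟨hy.1, h⟩⟩, hS.1.vertices _ hC, hS.1.vertices _ hD⟩, rfl⟩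
  · rintro ⟨f, u, h, rfl⟩
    refine isSplit_facesOfPair (h.isPolytope_inter_le hP) (h.isPolytope_inter_ge hP) ?_
      (isFaceOf_inter_le_inter_ge_left hP.convex) (isFaceOf_inter_le_inter_ge_right hP.convex)
      h.extremePoints_le h.extremePoints_ge h.not_inter_le_subset h.not_inter_ge_subset
    rw [← Set.inter_union_distrib_left, Set.inter_eq_left]
    exact fun x _ => le_total (f x) u

theorem IsSplitHyperplane.setOf_eq_eq (hP : IsPolytope P) (hf : IsSplitHyperplane P f u)
    (hg : IsSplitHyperplane P g v)
    (h : hyperplaneSubdivision P f u = hyperplaneSubdivision P g v) :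
    {x ∈ P | f x = u} = {x ∈ P | g x = v} := by
  have hpair : ({P ∩ {x | f x ≤ u}, P ∩ {x | u ≤ f x}} : Set (Set E)) =
      {P ∩ {x | g x ≤ v}, P ∩ {x | v ≤ g x}} := by
    rw [← setOf_maximalCell_facesOfPair (hf.isPolytope_inter_le hP) (hf.isPolytope_inter_ge hP)
      hf.not_inter_le_subset hf.not_inter_ge_subset,
      ← setOf_maximalCell_facesOfPair (hg.isPolytope_inter_le hP) (hg.isPolytope_inter_ge hP)
      hg.not_inter_le_subset hg.not_inter_ge_subset]
    exact congrArg (fun S => {C | MaximalCell S C}) h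
  rw [← inter_le_inter_ge_eq, ← inter_le_inter_ge_eq, ← Set.sInter_pair, hpair, Set.sInter_pair]

end SplitHyperplanes

section Perturbation

theorem eq_zero_of_eventually_add_smul_mem {E : Type*} [AddCommGroup E] [Module ℝ E] {K : Set E}
    {x d : E} (hx : x ∈ K.extremePoints ℝ) (hd : ∀ᶠ t : ℝ in nhds 0, x + t • d ∈ K) : d = 0 := by
  have hneg : ∀ᶠ t : ℝ in nhds 0, x + -t • d ∈ K := by
    refine Filter.Tendsto.eventually (p := fun t : ℝ => x + t • d ∈ K) ?_ hd
    simpa using (continuous_neg (G := ℝ)).tendsto 0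
  obtain ⟨t, ⟨hpos, hneg⟩, ht⟩ :=
    ((eventually_nhdsWithin_of_eventually_nhds (hd.and hneg)).and
      (eventually_mem_nhdsWithin (s := {(0 : ℝ)}ᶜ))).exists
  have hmem : x ∈ openSegment ℝ (x + t • d) (x + -t • d) :=
    ⟨1 / 2, 1 / 2, by norm_num, by norm_num, by norm_num, by module⟩
  have h0 : t • d = 0 := by simpa using hx.2 hpos hneg hmem
  exact (smul_eq_zero.1 h0).resolve_left ht

theorem exists_ne_notMem_of_sum_mem {ι G : Type*} [AddCommGroup G] {H : AddSubgroup G}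
    {s : Finset ι} {f : ι → G} (hs : ∑ l ∈ s, f l ∈ H) {i : ι} (hi : i ∈ s) (hfi : f i ∉ H) :
    ∃ j ∈ s, j ≠ i ∧ f j ∉ H := by
  by_contra! h
  rw [← Finset.add_sum_erase s f hi] at hs
  refine hfi ((H.add_mem_cancel_right (H.sum_mem fun j hj => ?_)).1 hs)
  exact h j (Finset.mem_of_mem_erase hj) (Finset.ne_of_mem_erase hj)

end Perturbation

section Exchange

variable {ι : Type*} [DecidableEq ι] {σ : Finset ι} {i j : ι}

theorem sum_insert_erase_add {M : Type*} [AddCommMonoid M] (hi : i ∈ σ) (hj : j ∉ σ) (f : ι → M) :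
    ∑ l ∈ insert j (σ.erase i), f l + f i = ∑ l ∈ σ, f l + f j := by
  rw [Finset.sum_insert (mt Finset.mem_of_mem_erase hj), add_assoc, Finset.sum_erase_add _ _ hi,
    add_comm]

theorem card_insert_erase (hi : i ∈ σ) (hj : j ∉ σ) :
    (insert j (σ.erase i)).card = σ.card := by
  rw [Finset.card_insert_of_notMem (mt Finset.mem_of_mem_erase hj), Finset.card_erase_add_one hi]

theorem card_insert_erase_inter_add {A : Finset ι} (hi : i ∈ σ) (hj : j ∉ σ) :
    (insert j (σ.erase i) ∩ A).card + (if i ∈ A then 1 else 0) =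
      (σ ∩ A).card + if j ∈ A then 1 else 0 := by
  simpa only [← Finset.filter_mem_eq_inter, Finset.card_filter] using
    sum_insert_erase_add hi hj fun l => if l ∈ A then 1 else 0

end Exchange

section Hypersimplex

variable {n k m : ℕ} {A σ : Finset (Fin n)} {x : Fin n → ℝ}

theorem sum_indicatorVec (A σ : Finset (Fin n)) :
    ∑ i ∈ A, indicatorVec (σ : Set (Fin n)) i = ((σ ∩ A).card : ℝ) := by
  simp [indicatorVec, Finset.sum_ite_mem, Finset.inter_comm]

theorem exists_eq_indicatorVec (hx : ∀ i, x i = 0 ∨ x i = 1) (hk : ∑ i, x i = k) :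
    ∃ σ : Finset (Fin n), σ.card = k ∧ x = indicatorVec (σ : Set (Fin n)) := by
  have hxσ : x = indicatorVec ((Finset.univ.filter fun i => x i = 1 : Finset (Fin n)) :
      Set (Fin n)) := by
    ext i
    rcases hx i with h | h <;> simp [indicatorVec, h]
  refine ⟨_, ?_, hxσ⟩
  rw [hxσ, sum_indicatorVec, Finset.inter_univ] at hk
  exact_mod_cast hk

/-- The points of the unit cube with coordinate sum `k` whose coordinates in `A` add up to at
most `m`. -/
def hypersimplexCut (k : ℕ) (A : Finset (Fin n)) (m : ℕ) : Set (Fin n → ℝ) :=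
  {x | (∀ i, x i ∈ Set.Icc 0 1) ∧ ∑ i, x i = k ∧ ∑ i ∈ A, x i ≤ m}

theorem eventually_add_smul_mem_hypersimplexCut (hx : x ∈ hypersimplexCut k A m) {d : Fin n → ℝ}
    (hd : ∀ l, d l ≠ 0 → x l ∈ Set.Ioo 0 1) (hsum : ∑ l, d l = 0)
    (hA : ∑ l ∈ A, d l = 0 ∨ ∑ l ∈ A, x l < m) :
    ∀ᶠ t : ℝ in nhds 0, x + t • d ∈ hypersimplexCut k A m := by
  obtain ⟨hx01, hxk, hxA⟩ := hx
  have hcont : ∀ l, Filter.Tendsto (fun t : ℝ => (x + t • d) l) (nhds 0) (nhds (x l)) := fun l =>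
    (show Continuous fun t : ℝ => x l + t * d l by fun_prop).tendsto' _ _ (by simp)
  have hB : ∀ B : Finset (Fin n), ∀ t : ℝ,
      ∑ l ∈ B, (x + t • d) l = ∑ l ∈ B, x l + t * ∑ l ∈ B, d l := fun B t => by
    simp [Finset.sum_add_distrib, Finset.mul_sum]
  have h01 : ∀ᶠ t : ℝ in nhds 0, ∀ l, (x + t • d) l ∈ Set.Icc 0 1 := by
    refine Filter.eventually_all.2 fun l => ?_
    by_cases hl : d l = 0
    · exact .of_forall fun t => by simpa [hl] using hx01 l
    · exact hcont l (Icc_mem_nhds (hd l hl).1 (hd l hl).2)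
  have hA' : ∀ᶠ t : ℝ in nhds 0, ∑ l ∈ A, (x + t • d) l ≤ m := by
    rcases hA with hA | hA
    · exact .of_forall fun t => by rwa [hB, hA, mul_zero, add_zero]
    · exact ((tendsto_finsetSum A fun l _ => hcont l).eventually_lt_const hA).mono
        fun _ => le_of_lt
  filter_upwards [h01, hA'] with t ht htA
  exact ⟨ht, by rw [hB, hsum, mul_zero, add_zero, hxk], htA⟩

-- Moving mass between two fractional coordinates stays inside the cut if both lie on the same side
-- of `A` or if the constraint on `A` is not tight; integrality of the sums provides such a pair.
theorem mem_range_intCast_of_mem_extremePoints_hypersimplexCut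
    (hx : x ∈ (hypersimplexCut k A m).extremePoints ℝ) (i : Fin n) :
    x i ∈ (Int.castAddHom ℝ).range := by
  set Z := (Int.castAddHom ℝ).range
  by_contra hi
  have hnat : ∀ a : ℕ, (a : ℝ) ∈ Z := fun a => ⟨a, by simp⟩
  obtain ⟨hx01, hxk, hxA⟩ := hx.1
  have hfrac : ∀ l, x l ∉ Z → x l ∈ Set.Ioo 0 1 := fun l hl =>
    ⟨(hx01 l).1.lt_of_ne fun h => hl (h ▸ Z.zero_mem),
      (hx01 l).2.lt_of_ne fun h => hl (by rw [h]; exact_mod_cast hnat 1)⟩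
  have hk : ∑ l, x l ∈ Z := hxk ▸ hnat k
  obtain ⟨j, hji, hj, hA⟩ : ∃ j, j ≠ i ∧ x j ∉ Z ∧ ((i ∈ A ↔ j ∈ A) ∨ ∑ l ∈ A, x l < m) := by
    by_cases hAZ : ∑ l ∈ A, x l ∈ Z
    · by_cases hiA : i ∈ A
      · obtain ⟨j, hjA, hji, hj⟩ := exists_ne_notMem_of_sum_mem hAZ hiA hi
        exact ⟨j, hji, hj, Or.inl (iff_of_true hiA hjA)⟩
      · rw [← Finset.sum_add_sum_compl A x, Z.add_mem_cancel_left hAZ] at hk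
        obtain ⟨j, hjA, hji, hj⟩ := exists_ne_notMem_of_sum_mem hk (Finset.mem_compl.2 hiA) hi
        exact ⟨j, hji, hj, Or.inl (iff_of_false hiA (Finset.mem_compl.1 hjA))⟩
    · obtain ⟨j, -, hji, hj⟩ := exists_ne_notMem_of_sum_mem hk (Finset.mem_univ i) hi
      exact ⟨j, hji, hj, Or.inr (hxA.lt_of_ne fun h => hAZ (h ▸ hnat m))⟩
  have hd := eq_zero_of_eventually_add_smul_mem hx (eventually_add_smul_mem_hypersimplexCut hx.1
    (d := Pi.single i 1 - Pi.single j 1) (fun l hl => ?_) (by simp)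
    (hA.imp_left fun hA => by simp [hA]))
  · simpa [hji.symm] using congrFun hd i
  · obtain rfl | hli := eq_or_ne l i
    · exact hfrac l hi
    obtain rfl | hlj := eq_or_ne l j
    · exact hfrac l hj
    · simp [hli, hlj] at hl

theorem exists_eq_indicatorVec_of_mem_extremePoints_hypersimplexCut
    (hx : x ∈ (hypersimplexCut k A m).extremePoints ℝ) :
    ∃ σ : Finset (Fin n), σ.card = k ∧ x = indicatorVec (σ : Set (Fin n)) := by
  refine exists_eq_indicatorVec (fun i => ?_) hx.1.2.1
  obtain ⟨a, ha⟩ := mem_range_intCast_of_mem_extremePoints_hypersimplexCut hx i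
  have h01 := hx.1.1 i
  simp only [← ha, Int.coe_castAddHom, Set.mem_Icc] at h01 ⊢
  norm_cast at h01 ⊢
  lia

theorem finite_setOf_eq_indicatorVec (k n : ℕ) : {x : Fin n → ℝ | ∃ σ : Finset (Fin n),
    σ.card = k ∧ x = indicatorVec (σ : Set (Fin n))}.Finite :=
  (Set.finite_range fun σ : Finset (Fin n) => indicatorVec (σ : Set (Fin n))).subset
    fun _ ⟨σ, _, hx⟩ => ⟨σ, hx.symm⟩

theorem isPolytope_hypersimplex (k n : ℕ) : IsPolytope (hypersimplex k n) :=
  ⟨(finite_setOf_eq_indicatorVec k n).toFinset, by rw [Set.Finite.coe_toFinset]; rfl⟩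

theorem indicatorVec_mem_hypersimplex (hσ : σ.card = k) :
    indicatorVec (σ : Set (Fin n)) ∈ hypersimplex k n :=
  subset_convexHull ℝ _ ⟨σ, hσ, rfl⟩

theorem convex_setOf_mem_Icc_sum_eq (k n : ℕ) :
    Convex ℝ {x : Fin n → ℝ | (∀ i, x i ∈ Set.Icc 0 1) ∧ ∑ i, x i = k} := by
  have hsum : IsLinearMap ℝ fun x : Fin n → ℝ => ∑ i, x i :=
    ⟨fun x y => by simp [Finset.sum_add_distrib], fun c x => by simp [Finset.mul_sum]⟩
  intro x hx y hy a b ha hb hab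
  refine ⟨fun i => convex_Icc 0 1 (hx.1 i) (hy.1 i) ha hb hab, ?_⟩
  exact convex_hyperplane hsum (k : ℝ) hx.2 hy.2 ha hb hab

theorem isCompact_setOf_mem_Icc_sum_eq (k n : ℕ) :
    IsCompact {x : Fin n → ℝ | (∀ i, x i ∈ Set.Icc 0 1) ∧ ∑ i, x i = k} := by
  have hsum : IsClosed {x : Fin n → ℝ | ∑ i, x i = k} := isClosed_eq (by fun_prop) (by fun_prop)
  have hbox := isCompact_univ_pi fun _ : Fin n => isCompact_Icc (a := (0 : ℝ)) (b := 1)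
  have hinter : {x : Fin n → ℝ | (∀ i, x i ∈ Set.Icc 0 1) ∧ ∑ i, x i = k} =
      (Set.univ.pi fun _ => Set.Icc 0 1) ∩ {x : Fin n → ℝ | ∑ i, x i = k} := by
    ext x
    simp only [Set.mem_inter_iff, Set.mem_univ_pi, Set.mem_ofPred_eq]
  exact hinter ▸ hbox.inter_right hsum

theorem mem_hypersimplex :
    x ∈ hypersimplex k n ↔ (∀ i, x i ∈ Set.Icc 0 1) ∧ ∑ i, x i = k := by
  have hcut : {x : Fin n → ℝ | (∀ i, x i ∈ Set.Icc 0 1) ∧ ∑ i, x i = k} =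
      hypersimplexCut k ∅ 0 := by
    simp [hypersimplexCut]
  refine ⟨fun hx => convexHull_min ?_ (convex_setOf_mem_Icc_sum_eq k n) hx, fun hx => ?_⟩
  · rintro _ ⟨σ, rfl, rfl⟩
    refine ⟨fun i => ?_, by simp [sum_indicatorVec]⟩
    unfold indicatorVec
    split_ifs <;> simp
  · have hext : {x : Fin n → ℝ | (∀ i, x i ∈ Set.Icc 0 1) ∧ ∑ i, x i = k}.extremePoints ℝ ⊆
        {x | ∃ σ : Finset (Fin n), σ.card = k ∧ x = indicatorVec (σ : Set (Fin n))} := by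
      rw [hcut]
      exact fun _ => exists_eq_indicatorVec_of_mem_extremePoints_hypersimplexCut
    refine convexHull_mono hext ?_
    rwa [← eq_convexHull_extremePoints_of_finite (isCompact_setOf_mem_Icc_sum_eq k n)
      (convex_setOf_mem_Icc_sum_eq k n) ((finite_setOf_eq_indicatorVec k n).subset hext)]

theorem isFaceOf_hypersimplex_setOf_coord_eq (s t : Finset (Fin n)) :
    IsFaceOf {x ∈ hypersimplex k n | (∀ i ∈ s, x i = 1) ∧ ∀ i ∈ t, x i = 0}
      (hypersimplex k n) := by
  constructor
  · refine ⟨Set.sep_subset _ _, fun x hx y hy z hz hzxy => ⟨hx, fun i hi => ?_, fun i hi => ?_⟩⟩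
    · exact ((isExtreme_setOf_eq_of_forall_le (f := LinearMap.proj i)
        fun x hx => ((mem_hypersimplex.1 hx).1 i).2).left_mem_of_mem_openSegment hx hy
        ⟨hz.1, hz.2.1 i hi⟩ hzxy).2
    · exact ((isExtreme_setOf_eq_of_forall_ge (f := LinearMap.proj i)
        fun x hx => ((mem_hypersimplex.1 hx).1 i).1).left_mem_of_mem_openSegment hx hy
        ⟨hz.1, hz.2.2 i hi⟩ hzxy).2
  · intro x hx y hy a b ha hb hab
    refine ⟨(isPolytope_hypersimplex k n).convex hx.1 hy.1 ha hb hab, fun i hi => ?_,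
      fun i hi => ?_⟩
    · simp [hx.2.1 i hi, hy.2.1 i hi, hab]
    · simp [hx.2.2 i hi, hy.2.2 i hi]

theorem indicatorVec_mem_extremePoints_hypersimplex (hσ : σ.card = k) :
    indicatorVec (σ : Set (Fin n)) ∈ (hypersimplex k n).extremePoints ℝ := by
  rw [← isExtreme_singleton]
  suffices h : {indicatorVec (σ : Set (Fin n))} =
      {x ∈ hypersimplex k n | (∀ i ∈ σ, x i = 1) ∧ ∀ i ∈ σᶜ, x i = 0} from
    h ▸ (isFaceOf_hypersimplex_setOf_coord_eq σ σᶜ).1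
  ext x
  refine ⟨?_, fun hx => funext fun i => ?_⟩
  · rintro rfl
    exact ⟨indicatorVec_mem_hypersimplex hσ, by simp +contextual [indicatorVec]⟩
  · by_cases hi : i ∈ σ
    · simp [indicatorVec, hi, hx.2.1 i hi]
    · simp [indicatorVec, hi, hx.2.2 i (Finset.mem_compl.2 hi)]

theorem isFaceOf_segment_indicatorVec (hσ : σ.card = k) {i j : Fin n} (hi : i ∈ σ) (hj : j ∉ σ) :
    IsFaceOf (segment ℝ (indicatorVec (σ : Set (Fin n)))
      (indicatorVec (insert j (σ.erase i) : Finset (Fin n)))) (hypersimplex k n) := by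
  have hij : i ≠ j := fun h => hj (h ▸ hi)
  have hface := isFaceOf_hypersimplex_setOf_coord_eq (k := k) (σ.erase i) (insert j σ)ᶜ
  convert hface using 1
  refine subset_antisymm (hface.2.segment_subset ?_ ?_) fun x hx => ?_
  · exact ⟨indicatorVec_mem_hypersimplex hσ, by simp +contextual [indicatorVec]⟩
  · exact ⟨indicatorVec_mem_hypersimplex ((card_insert_erase hi hj).trans hσ),
      by simp +contextual [indicatorVec]⟩
  · obtain ⟨hx, hx1, hx0⟩ := hx
    have hrest : ∀ l, l ≠ i ∧ l ≠ j → x l = if l ∈ σ then 1 else 0 := fun l hl => by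
      split_ifs with hlσ
      · exact hx1 l (Finset.mem_erase.2 ⟨hl.1, hlσ⟩)
      · exact hx0 l (by simp [hl.2, hlσ])
    have hxij : x i - 1 + x j = 0 := by
      have := Fintype.sum_eq_add (f := fun l => x l - indicatorVec (σ : Set (Fin n)) l) i j hij
        fun l hl => by simp [hrest l hl, indicatorVec]
      simpa [indicatorVec, hi, hj, Finset.sum_sub_distrib, sum_indicatorVec,
        (mem_hypersimplex.1 hx).2, hσ] using this.symm
    obtain ⟨hj0, hj1⟩ := (mem_hypersimplex.1 hx).1 j
    refine ⟨1 - x j, x j, by linarith, hj0, by ring, funext fun l => ?_⟩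
    obtain rfl | hli := eq_or_ne l i
    · simpa [indicatorVec, hi, hij, ← sub_eq_iff_eq_add, sub_eq_zero] using by linarith
    obtain rfl | hlj := eq_or_ne l j
    · simp [indicatorVec, hj]
    · rw [hrest l ⟨hli, hlj⟩]
      by_cases hlσ : l ∈ σ <;> simp [indicatorVec, hli, hlj, hlσ]

end Hypersimplex

section SplitData

variable {n k m μ : ℕ} {A : Finset (Fin n)}

/-- The linear form `∑ i ∈ A, x i`, the left-hand side of the equation of an
`(A, B; μ)`-hyperplane. -/
def coordSum (A : Finset (Fin n)) : StrongDual ℝ (Fin n → ℝ) :=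
  ∑ i ∈ A, ContinuousLinearMap.proj i

theorem coordSum_apply (A : Finset (Fin n)) (x : Fin n → ℝ) : coordSum A x = ∑ i ∈ A, x i := by
  simp [coordSum]

theorem coordSum_indicatorVec (A σ : Finset (Fin n)) :
    coordSum A (indicatorVec (σ : Set (Fin n))) = ((σ ∩ A).card : ℝ) := by
  rw [coordSum_apply, sum_indicatorVec]

theorem coordSum_compl {x : Fin n → ℝ} (hx : x ∈ hypersimplex k n) :
    coordSum Aᶜ x = k - coordSum A x := by
  rw [coordSum_apply, coordSum_apply, ← (mem_hypersimplex.1 hx).2, ← Finset.sum_add_sum_compl A,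
    add_sub_cancel_left]

theorem hypersimplex_inter_coordSum_le :
    hypersimplex k n ∩ {x | coordSum A x ≤ m} = hypersimplexCut k A m := by
  ext x
  simp only [hypersimplexCut, Set.mem_inter_iff, Set.mem_ofPred_eq, mem_hypersimplex,
    coordSum_apply, and_assoc]

theorem hypersimplex_inter_le_coordSum (hm : m ≤ k) :
    hypersimplex k n ∩ {x | (m : ℝ) ≤ coordSum A x} = hypersimplexCut k Aᶜ (k - m) := by
  rw [← hypersimplex_inter_coordSum_le]
  ext x
  refine and_congr_right fun hx => ?_
  rw [Set.mem_ofPred_eq, Set.mem_ofPred_eq, coordSum_compl hx, Nat.cast_sub hm, sub_le_sub_iff_left]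

theorem extremePoints_hypersimplexCut_subset :
    (hypersimplexCut k A m).extremePoints ℝ ⊆ (hypersimplex k n).extremePoints ℝ := by
  intro x hx
  obtain ⟨σ, hσ, rfl⟩ := exists_eq_indicatorVec_of_mem_extremePoints_hypersimplexCut hx
  exact indicatorVec_mem_extremePoints_hypersimplex hσ

theorem exists_card_eq_inter_eq {s : Finset (Fin n)} (hs : s ⊆ A) {q : ℕ} (hq : q ≤ Aᶜ.card) :
    ∃ σ : Finset (Fin n), σ.card = s.card + q ∧ σ ∩ A = s := by
  obtain ⟨t, ht, rfl⟩ := Finset.exists_subset_card_eq hq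
  have htA : Disjoint t A := Finset.disjoint_of_subset_left ht disjoint_compl_left
  refine ⟨s ∪ t, Finset.card_union_of_disjoint (Finset.disjoint_of_subset_left hs htA.symm), ?_⟩
  rw [Finset.union_inter_distrib_right, Finset.disjoint_iff_inter_eq_empty.1 htA,
    Finset.union_empty, Finset.inter_eq_left.2 hs]

theorem exists_card_eq_card_inter_eq (hmk : m ≤ k) (hm : m ≤ A.card) (hk : k ≤ Aᶜ.card + m) :
    ∃ σ : Finset (Fin n), σ.card = k ∧ (σ ∩ A).card = m := by
  obtain ⟨s, hs, rfl⟩ := Finset.exists_subset_card_eq hm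
  obtain ⟨σ, hσ, rfl⟩ := exists_card_eq_inter_eq hs (q := k - s.card) (by lia)
  exact ⟨σ, by lia, rfl⟩

/-- The numerical conditions `1 ≤ μ ≤ k - 1`, `|A| ≥ μ + 1`, `|B| ≥ k - μ + 1` under which the
`(A, B; μ)`-hyperplane with `B = Aᶜ` splits `Δ(k,n)`, written without subtraction. -/
def IsSplitDatum (k : ℕ) (A : Finset (Fin n)) (μ : ℕ) : Prop :=
  1 ≤ μ ∧ μ < k ∧ μ < A.card ∧ k < Aᶜ.card + μ

theorem isSplitDatum_card_inter {ω : Finset (Fin n)} (hω : ω.card = k) (hωA : (ω ∩ A).Nonempty)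
    (hω_A : (ω \ A).Nonempty) (hA_ω : (A \ ω).Nonempty) (hAc_ω : (Aᶜ \ ω).Nonempty) :
    IsSplitDatum k A (ω ∩ A).card := by
  have hω' := Finset.card_sdiff_add_card_inter ω A
  have hA' := Finset.card_sdiff_add_card_inter A ω
  have hAc' := Finset.card_sdiff_add_card_inter Aᶜ ω
  rw [Finset.inter_comm] at hA'
  rw [Finset.inter_comm, ← Finset.sdiff_eq_inter_compl] at hAc'
  rw [← Finset.card_pos] at *
  refine ⟨?_, ?_, ?_, ?_⟩ <;> lia

namespace IsSplitDatum

theorem compl (h : IsSplitDatum k A μ) : IsSplitDatum k Aᶜ (k - μ) := by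
  obtain ⟨h1, h2, h3, h4⟩ := h
  refine ⟨by lia, by lia, by lia, ?_⟩
  rw [compl_compl]
  lia

theorem isSplitHyperplane (h : IsSplitDatum k A μ) :
    IsSplitHyperplane (hypersimplex k n) (coordSum A) μ := by
  obtain ⟨h1, h2, h3, h4⟩ := h
  constructor
  · obtain ⟨σ, hσ, hσA⟩ :=
      exists_card_eq_card_inter_eq (k := k) (A := A) (m := μ - 1) (by lia) (by lia) (by lia)
    refine ⟨_, indicatorVec_mem_hypersimplex hσ, ?_⟩
    rw [coordSum_indicatorVec, hσA, Nat.cast_lt]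
    lia
  · obtain ⟨σ, hσ, hσA⟩ := exists_card_eq_card_inter_eq (A := A) (m := μ + 1) h2 h3 (by lia)
    refine ⟨_, indicatorVec_mem_hypersimplex hσ, ?_⟩
    rw [coordSum_indicatorVec, hσA, Nat.cast_lt]
    lia
  · rw [hypersimplex_inter_coordSum_le]
    exact extremePoints_hypersimplexCut_subset
  · rw [hypersimplex_inter_le_coordSum h2.le]
    exact extremePoints_hypersimplexCut_subset

theorem hyperplaneSubdivision_compl (h : IsSplitDatum k A μ) :
    hyperplaneSubdivision (hypersimplex k n) (coordSum Aᶜ) (k - μ : ℕ) =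
      hyperplaneSubdivision (hypersimplex k n) (coordSum A) μ := by
  refine hyperplaneSubdivision_eq_of_sub_eq_mul (r := -1) (by norm_num) fun x hx => ?_
  rw [coordSum_compl hx, Nat.cast_sub h.2.1.le]
  ring

theorem card_inter_eq_iff_of_hyperplaneSubdivision_eq {A' : Finset (Fin n)} {μ' : ℕ}
    (h : IsSplitDatum k A μ) (h' : IsSplitDatum k A' μ')
    (heq : hyperplaneSubdivision (hypersimplex k n) (coordSum A) μ =
      hyperplaneSubdivision (hypersimplex k n) (coordSum A') μ') {σ : Finset (Fin n)}
    (hσ : σ.card = k) : (σ ∩ A).card = μ ↔ (σ ∩ A').card = μ' := by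
  have hmem := Set.ext_iff.1 (h.isSplitHyperplane.setOf_eq_eq (isPolytope_hypersimplex k n)
    h'.isSplitHyperplane heq) (indicatorVec (σ : Set (Fin n)))
  simpa only [Set.mem_ofPred_eq, indicatorVec_mem_hypersimplex hσ, true_and,
    coordSum_indicatorVec, Nat.cast_inj] using hmem

theorem mem_iff_mem_of_forall_card_inter_eq_iff {A' : Finset (Fin n)} {μ' : ℕ}
    (h : IsSplitDatum k A μ)
    (hμ : ∀ σ : Finset (Fin n), σ.card = k → ((σ ∩ A).card = μ ↔ (σ ∩ A').card = μ'))
    {i j : Fin n} (hi : i ∈ A) (hj : j ∈ A) : i ∈ A' ↔ j ∈ A' := by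
  obtain rfl | hij := eq_or_ne i j
  · rfl
  obtain ⟨h1, h2, h3, h4⟩ := h
  obtain ⟨s, his, hsA, hs⟩ := Finset.exists_subsuperset_card_eq (s := {i}) (t := A.erase j)
    (n := μ) (by simpa using ⟨hij, hi⟩) (by simpa using h1)
    (by rw [Finset.card_erase_of_mem hj]; lia)
  obtain ⟨σ, hσ, rfl⟩ := exists_card_eq_inter_eq (hsA.trans (Finset.erase_subset j A))
    (q := k - μ) (by lia)
  have hiσ : i ∈ σ := Finset.mem_of_mem_inter_left (Finset.singleton_subset_iff.1 his)
  have hjσ : j ∉ σ := fun hjσ =>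
    Finset.notMem_erase j A (hsA (Finset.mem_inter.2 ⟨hjσ, hj⟩))
  have hτA := card_insert_erase_inter_add (A := A) hiσ hjσ
  have hτA' := card_insert_erase_inter_add (A := A') hiσ hjσ
  simp only [hi, hj, if_true, add_left_inj] at hτA
  rw [(hμ σ (by lia)).1 hs,
    (hμ _ ((card_insert_erase hiσ hjσ).trans (by lia))).1 (hτA.trans hs), add_right_inj] at hτA'
  by_cases hiA' : i ∈ A' <;> by_cases hjA' : j ∈ A' <;> simp_all

theorem eq_of_hyperplaneSubdivision_eq {A' : Finset (Fin n)} {μ' : ℕ} (h : IsSplitDatum k A μ)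
    (h' : IsSplitDatum k A' μ') {i : Fin n} (hi : i ∈ A) (hi' : i ∈ A')
    (heq : hyperplaneSubdivision (hypersimplex k n) (coordSum A) μ =
      hyperplaneSubdivision (hypersimplex k n) (coordSum A') μ') : A = A' ∧ μ = μ' := by
  have hμ : ∀ σ : Finset (Fin n), σ.card = k → ((σ ∩ A).card = μ ↔ (σ ∩ A').card = μ') :=
    fun σ hσ => h.card_inter_eq_iff_of_hyperplaneSubdivision_eq h' heq hσ
  obtain rfl : A = A' := subset_antisymm
    (fun j hj => (h.mem_iff_mem_of_forall_card_inter_eq_iff hμ hi hj).1 hi')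
    fun j hj =>
      (h'.mem_iff_mem_of_forall_card_inter_eq_iff (fun σ hσ => (hμ σ hσ).symm) hi' hj).1 hi
  obtain ⟨-, h2, h3, h4⟩ := h
  obtain ⟨σ, hσ, hσA⟩ := exists_card_eq_card_inter_eq h2.le h3.le h4.le
  exact ⟨rfl, hσA.symm.trans ((hμ σ hσ).1 hσA)⟩

end IsSplitDatum

end SplitData

section ExchangeCrossing

theorem exists_lt_of_sum_lt_of_card_eq {ι : Type*} {a : ι → ℝ} {σ τ : Finset ι}
    (hστ : σ.card = τ.card) (h : ∑ l ∈ σ, a l < ∑ l ∈ τ, a l) : ∃ i ∈ σ, ∃ j ∉ σ, a i < a j := by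
  by_contra! hle
  have hsum := Finset.sum_sdiff_sub_sum_sdiff (s₁ := σ) (s₂ := τ) (f := a)
  have hcard : (σ \ τ).card = (τ \ σ).card := Finset.card_sdiff_comm hστ
  obtain hem | hne := (σ \ τ).eq_empty_or_nonempty
  · rw [hem, Finset.card_eq_zero.1 (hcard.symm.trans (by rw [hem, Finset.card_empty]))] at hsum
    simp only [Finset.sum_empty, sub_zero] at hsum
    linarith
  · obtain ⟨i, hi, hmin⟩ := Finset.exists_min_image _ a hne
    have hτ := Finset.sum_le_card_nsmul (τ \ σ) a (a i) fun j hj =>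
      hle i (Finset.mem_sdiff.1 hi).1 j (Finset.mem_sdiff.1 hj).2
    have hσ := Finset.card_nsmul_le_sum (σ \ τ) a (a i) hmin
    rw [hcard] at hσ
    linarith

variable {ι : Type*} [DecidableEq ι] {k : ℕ} {a : ι → ℝ} {u : ℝ}

/-- No exchange of one element of a `k`-set for another crosses the level `u` of the weight `a`.
For a linear form with coefficients `a` this says that its level `u` cuts through no edge of the
hypersimplex. -/
def NoExchangeCrosses (k : ℕ) (a : ι → ℝ) (u : ℝ) : Prop :=
  ∀ ⦃σ : Finset ι⦄, σ.card = k → ∀ ⦃i⦄, i ∈ σ → ∀ ⦃j⦄, j ∉ σ →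
    u < ∑ l ∈ σ, a l → u ≤ ∑ l ∈ insert j (σ.erase i), a l

namespace NoExchangeCrosses

theorem exists_sum_eq [Finite ι] (h : NoExchangeCrosses k a u)
    (hgt : ∃ σ : Finset ι, σ.card = k ∧ u < ∑ l ∈ σ, a l)
    (hlt : ∃ τ : Finset ι, τ.card = k ∧ ∑ l ∈ τ, a l < u) :
    ∃ ω : Finset ι, ω.card = k ∧ ∑ l ∈ ω, a l = u := by
  obtain ⟨σ, ⟨hσ, hσu⟩, hmin⟩ := Set.exists_min_image
    {σ : Finset ι | σ.card = k ∧ u < ∑ l ∈ σ, a l} (fun σ => ∑ l ∈ σ, a l) (Set.toFinite _) hgt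
  obtain ⟨τ, hτ, hτu⟩ := hlt
  obtain ⟨i, hi, j, hj, hij⟩ := exists_lt_of_sum_lt_of_card_eq (a := -a) (hσ.trans hτ.symm)
    (by simpa using hτu.trans hσu)
  have hsum := sum_insert_erase_add hi hj a
  have hcard := (card_insert_erase hi hj).trans hσ
  refine ⟨_, hcard, (h hσ hi hj hσu).antisymm' (le_of_not_gt fun hgt => ?_)⟩
  linarith [hmin _ ⟨hcard, hgt⟩, neg_lt_neg_iff.1 hij]

variable {ω : Finset ι} {p q : ι}

theorem le_of_lt_of_notMem (h : NoExchangeCrosses k a u) (hω : ω.card = k)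
    (hωu : ∑ l ∈ ω, a l = u) (hp : p ∈ ω) (hq : q ∉ ω) (hpq : a p < a q) {s : ι} (hs : s ∉ ω) :
    a p ≤ a s := by
  obtain rfl | hsq := eq_or_ne s q
  · exact hpq.le
  have hσ := sum_insert_erase_add hp hq a
  have hτ := sum_insert_erase_add hp hs a
  have hle := h ((card_insert_erase hp hq).trans hω) (Finset.mem_insert_self q _) (j := s)
    (by simp [hsq, hs]) (by linarith)
  rw [Finset.erase_insert (mt Finset.mem_of_mem_erase hq)] at hle
  linarith

theorem le_of_lt_of_mem (h : NoExchangeCrosses k a u) (hω : ω.card = k)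
    (hωu : ∑ l ∈ ω, a l = u) (hp : p ∈ ω) (hq : q ∉ ω) (hpq : a p < a q) {r : ι} (hr : r ∈ ω) :
    a r ≤ a q := by
  obtain rfl | hrp := eq_or_ne r p
  · exact hpq.le
  have hpq' : p ≠ q := ne_of_mem_of_not_mem hp hq
  have hrq : r ≠ q := ne_of_mem_of_not_mem hr hq
  have hσ := sum_insert_erase_add hp hq a
  have hτ := sum_insert_erase_add hr hq a
  have hle := h ((card_insert_erase hp hq).trans hω) (i := r) (by simp [hrp, hr]) (j := p)
    (by simp [hpq']) (by linarith)
  rw [show insert p ((insert q (ω.erase p)).erase r) = insert q (ω.erase r) by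
    ext l
    simp only [Finset.mem_insert, Finset.mem_erase]
    grind] at hle
  linarith

-- At a `k`-set `ω` of weight exactly `u`, an exchange `p → q` that increases the weight and an
-- exchange `r → s` that decreases it cannot share an element, since the two resulting `k`-sets
-- would differ by a single exchange.
theorem exists_two_values [Finite ι] (h : NoExchangeCrosses k a u)
    (hgt : ∃ σ : Finset ι, σ.card = k ∧ u < ∑ l ∈ σ, a l)
    (hlt : ∃ τ : Finset ι, τ.card = k ∧ ∑ l ∈ τ, a l < u) :
    ∃ (α β : ℝ) (ω : Finset ι), β < α ∧ (∀ l, a l = α ∨ a l = β) ∧ ω.card = k ∧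
      ∑ l ∈ ω, a l = u ∧ (∃ l ∈ ω, a l = α) ∧ (∃ l ∈ ω, a l = β) ∧ (∃ l ∉ ω, a l = α) ∧
        ∃ l ∉ ω, a l = β := by
  obtain ⟨ω, hω, hωu⟩ := h.exists_sum_eq hgt hlt
  obtain ⟨σ, hσ, hσu⟩ := hgt
  obtain ⟨τ, hτ, hτu⟩ := hlt
  obtain ⟨p, hp, q, hq, hpq⟩ := exists_lt_of_sum_lt_of_card_eq (hω.trans hσ.symm)
    (hωu.trans_lt hσu)
  obtain ⟨r, hr, s, hs, hrs⟩ := exists_lt_of_sum_lt_of_card_eq (a := -a) (hω.trans hτ.symm)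
    (by simpa [hωu] using hτu)
  have hsr : a s < a r := neg_lt_neg_iff.1 hrs
  have hp_le : ∀ l ∉ ω, a p ≤ a l := fun l hl => h.le_of_lt_of_notMem hω hωu hp hq hpq hl
  have hle_q : ∀ l ∈ ω, a l ≤ a q := fun l hl => h.le_of_lt_of_mem hω hωu hp hq hpq hl
  have hle_r : ∀ l ∉ ω, a l ≤ a r := fun l hl =>
    le_of_not_gt fun hlt => (h.le_of_lt_of_notMem hω hωu hr hl hlt hs).not_gt hsr
  have hs_le : ∀ l ∈ ω, a s ≤ a l := fun l hl =>
    le_of_not_gt fun hlt => (h.le_of_lt_of_mem hω hωu hl hs hlt hr).not_gt hsr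
  have hqr : a r = a q := (hle_q r hr).antisymm (hle_r q hq)
  have hps : a p = a s := (hp_le s hs).antisymm (hs_le p hp)
  refine ⟨a q, a p, ω, hpq, fun l => ?_, hω, hωu, ⟨r, hr, hqr⟩, ⟨p, hp, rfl⟩, ⟨q, hq, rfl⟩,
    s, hs, hps.symm⟩
  by_cases hl : l ∈ ω
  · refine (hle_q l hl).eq_or_lt.imp_right fun hlq => ?_
    exact hps ▸ (h.le_of_lt_of_notMem hω hωu hl hq hlq hs).antisymm (hs_le l hl)
  · refine (hp_le l hl).eq_or_lt.symm.imp (fun hpl => ?_) Eq.symm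
    exact hqr ▸ (hle_r l hl).antisymm (h.le_of_lt_of_mem hω hωu hp hl hpl hr)

end NoExchangeCrosses

end ExchangeCrossing

section Classification

variable {n k μ : ℕ} {A : Finset (Fin n)} {f : StrongDual ℝ (Fin n → ℝ)} {u : ℝ}

theorem eq_smul_coordSum_add_smul_coordSum {α β : ℝ}
    (hf : ∀ i, f (Pi.single i 1) = if i ∈ A then α else β) :
    f = β • coordSum Finset.univ + (α - β) • coordSum A := by
  refine ContinuousLinearMap.coe_injective (LinearMap.pi_ext' fun i => LinearMap.ext_ring ?_)
  by_cases hi : i ∈ A <;> simp [coordSum_apply, hf, hi]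

theorem apply_indicatorVec (f : StrongDual ℝ (Fin n → ℝ)) (σ : Finset (Fin n)) :
    f (indicatorVec (σ : Set (Fin n))) = ∑ i ∈ σ, f (Pi.single i 1) := by
  have hσ : indicatorVec (σ : Set (Fin n)) = ∑ i ∈ σ, Pi.single i 1 := by
    ext j
    simp [indicatorVec, Finset.sum_apply, Pi.single_apply]
  rw [hσ, map_sum]

theorem IsSplitHyperplane.noExchangeCrosses (h : IsSplitHyperplane (hypersimplex k n) f u) :
    NoExchangeCrosses k (fun i => f (Pi.single i 1)) u := by
  intro σ hσ i hi j hj hu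
  rw [← apply_indicatorVec] at hu ⊢
  exact h.le_of_isFaceOf_segment (isFaceOf_segment_indicatorVec hσ hi hj) hu

theorem exists_apply_le_sum_of_mem_hypersimplex (f : StrongDual ℝ (Fin n → ℝ)) {x : Fin n → ℝ}
    (hx : x ∈ hypersimplex k n) :
    ∃ σ : Finset (Fin n), σ.card = k ∧ f x ≤ ∑ i ∈ σ, f (Pi.single i 1) := by
  obtain ⟨_, ⟨σ, hσ, rfl⟩, hle⟩ :=
    (f.toLinearMap.convexOn convex_univ).exists_ge_of_mem_convexHull (Set.subset_univ _) hx
  exact ⟨σ, hσ, hle.trans_eq (apply_indicatorVec f σ)⟩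

theorem exists_sum_le_apply_of_mem_hypersimplex (f : StrongDual ℝ (Fin n → ℝ)) {x : Fin n → ℝ}
    (hx : x ∈ hypersimplex k n) :
    ∃ σ : Finset (Fin n), σ.card = k ∧ ∑ i ∈ σ, f (Pi.single i 1) ≤ f x := by
  simpa using exists_apply_le_sum_of_mem_hypersimplex (-f) hx

theorem IsSplitHyperplane.exists_isSplitDatum (h : IsSplitHyperplane (hypersimplex k n) f u) :
    ∃ A μ, IsSplitDatum k A μ ∧ hyperplaneSubdivision (hypersimplex k n) f u =
      hyperplaneSubdivision (hypersimplex k n) (coordSum A) μ := by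
  obtain ⟨x, hx, hxu⟩ := h.exists_gt
  obtain ⟨y, hy, hyu⟩ := h.exists_lt
  obtain ⟨σ, hσ, hσx⟩ := exists_apply_le_sum_of_mem_hypersimplex f hx
  obtain ⟨τ, hτ, hτy⟩ := exists_sum_le_apply_of_mem_hypersimplex f hy
  obtain ⟨α, β, ω, hβα, hval, hω, hωu, ⟨r, hrω, hr⟩, ⟨p, hpω, hp⟩, ⟨q, hqω, hq⟩, s, hsω, hs⟩ :=
    h.noExchangeCrosses.exists_two_values ⟨σ, hσ, hxu.trans_le hσx⟩ ⟨τ, hτ, hτy.trans_lt hyu⟩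
  set A : Finset (Fin n) := Finset.univ.filter fun i => f (Pi.single i 1) = α with hA
  have hmemA : ∀ i, i ∈ A ↔ f (Pi.single i 1) = α := fun i => by simp [hA]
  have hf : f = β • coordSum Finset.univ + (α - β) • coordSum A :=
    eq_smul_coordSum_add_smul_coordSum fun i => by
      split_ifs with hi
      · exact (hmemA i).1 hi
      · exact (hval i).resolve_left (mt (hmemA i).2 hi)
  have hfu : ∀ z ∈ hypersimplex k n, f z = β * k + (α - β) * coordSum A z := fun z hz => by
    conv_lhs => rw [hf]
    simp [coordSum_apply Finset.univ, (mem_hypersimplex.1 hz).2]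
  rw [← apply_indicatorVec, hfu _ (indicatorVec_mem_hypersimplex hω), coordSum_indicatorVec] at hωu
  have hmemAc : ∀ {i}, f (Pi.single i 1) = β → i ∉ A := fun hi hiA =>
    hβα.ne (hi.symm.trans ((hmemA _).1 hiA))
  refine ⟨A, (ω ∩ A).card, isSplitDatum_card_inter hω
    ⟨r, Finset.mem_inter.2 ⟨hrω, (hmemA r).2 hr⟩⟩ ⟨p, Finset.mem_sdiff.2 ⟨hpω, hmemAc hp⟩⟩
    ⟨q, Finset.mem_sdiff.2 ⟨(hmemA q).2 hq, hqω⟩⟩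
    ⟨s, Finset.mem_sdiff.2 ⟨Finset.mem_compl.2 (hmemAc hs), hsω⟩⟩,
    hyperplaneSubdivision_eq_of_sub_eq_mul (sub_ne_zero.2 hβα.ne') fun z hz => ?_⟩
  rw [hfu z hz, ← hωu]
  ring

theorem isSplit_hypersimplex_iff {S : Set (Set (Fin n → ℝ))} :
    IsSplit (hypersimplex k n) S ↔ ∃ A μ, IsSplitDatum k A μ ∧
      S = hyperplaneSubdivision (hypersimplex k n) (coordSum A) μ := by
  rw [isSplit_iff_exists_isSplitHyperplane (isPolytope_hypersimplex k n)]
  constructor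
  · rintro ⟨f, u, h, rfl⟩
    exact h.exists_isSplitDatum
  · rintro ⟨A, μ, h, rfl⟩
    exact ⟨_, _, h.isSplitHyperplane, rfl⟩

end Classification

section Counting

variable {n k : ℕ}

theorem card_filter_card_le (α : Type*) [Fintype α] (m : ℕ) :
    (Finset.univ.filter fun A : Finset α => A.card ≤ m).card =
      ∑ j ∈ Finset.range (m + 1), (Fintype.card α).choose j := by
  rw [Finset.card_eq_sum_card_fiberwise (f := Finset.card) (t := Finset.range (m + 1))
    fun A hA => by simpa [Nat.lt_succ_iff] using hA]
  refine Finset.sum_congr rfl fun j hj => ?_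
  rw [← Finset.card_univ, ← Finset.card_powersetCard, ← Finset.univ_filter_card_eq,
    Finset.filter_filter]
  congr 1
  refine Finset.filter_congr fun A _ => and_iff_right_of_imp fun hA => ?_
  exact hA.trans_le (Finset.mem_range_succ_iff.1 hj)

theorem card_filter_card_compl_le (α : Type*) [Fintype α] [DecidableEq α] (m : ℕ) :
    (Finset.univ.filter fun A : Finset α => Aᶜ.card ≤ m).card =
      ∑ j ∈ Finset.range (m + 1), (Fintype.card α).choose j := by
  rw [← card_filter_card_le]
  exact Finset.card_nbij' compl compl (fun A hA => by simpa using hA)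
    (fun A hA => by simpa using hA) (fun A _ => compl_compl A) fun A _ => compl_compl A

/-- The pairs `(A, μ)` whose hyperplane splits `Δ(k,n)`. -/
noncomputable def splitData (k n : ℕ) : Finset (Finset (Fin n) × ℕ) :=
  (Finset.univ ×ˢ Finset.Ico 1 k).filter fun p => IsSplitDatum k p.1 p.2

theorem mem_splitData {p : Finset (Fin n) × ℕ} :
    p ∈ splitData k n ↔ IsSplitDatum k p.1 p.2 := by
  simp only [splitData, Finset.mem_filter, Finset.mem_product, Finset.mem_univ, true_and,
    Finset.mem_Ico, and_iff_right_iff_imp]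
  exact fun h => ⟨h.1, h.2.1⟩

theorem two_mul_card_filter_mem_splitData (k : ℕ) (i : Fin n) :
    2 * ((splitData k n).filter fun p => i ∈ p.1).card = (splitData k n).card := by
  rw [← Finset.card_filter_add_card_filter_not (s := splitData k n) fun p => i ∈ p.1, two_mul,
    add_right_inj]
  have hcompl : ∀ p ∈ splitData k n, (p.1ᶜ, k - p.2) ∈ splitData k n ∧
      ((p.1ᶜ)ᶜ, k - (k - p.2)) = p := fun p hp =>
    ⟨mem_splitData.2 (mem_splitData.1 hp).compl,
      Prod.ext (compl_compl _) (Nat.sub_sub_self (mem_splitData.1 hp).2.1.le)⟩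
  refine Finset.card_nbij' (fun p => (p.1ᶜ, k - p.2)) (fun p => (p.1ᶜ, k - p.2))
    (fun p hp => ?_) (fun p hp => ?_) (fun p hp => ?_) fun p hp => ?_
  all_goals obtain ⟨hp, hip⟩ := Finset.mem_filter.1 hp
  · exact Finset.mem_filter.2 ⟨(hcompl p hp).1, by simpa using hip⟩
  · exact Finset.mem_filter.2 ⟨(hcompl p hp).1, by simpa using hip⟩
  · exact (hcompl p hp).2
  · exact (hcompl p hp).2

theorem ncard_setOf_isSplit_hypersimplex (k : ℕ) (i : Fin n) :
    {S : Set (Set (Fin n → ℝ)) | IsSplit (hypersimplex k n) S}.ncard =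
      ((splitData k n).filter fun p => i ∈ p.1).card := by
  rw [← Set.ncard_coe_finset]
  refine (Set.ncard_congr
    (fun p _ => hyperplaneSubdivision (hypersimplex k n) (coordSum p.1) p.2)
    (fun p hp => ?_) (fun p q hp hq heq => ?_) fun S hS => ?_).symm
  · exact isSplit_hypersimplex_iff.2 ⟨_, _, mem_splitData.1 (Finset.mem_filter.1 hp).1, rfl⟩
  · obtain ⟨hp, hip⟩ := Finset.mem_filter.1 hp
    obtain ⟨hq, hiq⟩ := Finset.mem_filter.1 hq
    obtain ⟨hA, hμ⟩ :=
      (mem_splitData.1 hp).eq_of_hyperplaneSubdivision_eq (mem_splitData.1 hq) hip hiq heq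
    exact Prod.ext hA hμ
  · obtain ⟨A, μ, h, rfl⟩ := isSplit_hypersimplex_iff.1 hS
    by_cases hi : i ∈ A
    · exact ⟨(A, μ), Finset.mem_filter.2 ⟨mem_splitData.2 h, hi⟩, rfl⟩
    · exact ⟨(Aᶜ, k - μ), Finset.mem_filter.2 ⟨mem_splitData.2 h.compl, Finset.mem_compl.2 hi⟩,
        h.hyperplaneSubdivision_compl⟩

theorem two_mul_ncard_setOf_isSplit_hypersimplex (k : ℕ) (hn : 0 < n) :
    2 * {S : Set (Set (Fin n → ℝ)) | IsSplit (hypersimplex k n) S}.ncard =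
      (splitData k n).card := by
  rw [ncard_setOf_isSplit_hypersimplex k ⟨0, hn⟩, two_mul_card_filter_mem_splitData]

theorem card_filter_isSplitDatum_add (hkn : k < n) {μ : ℕ} (hμ : μ ∈ Finset.Ico 1 k) :
    (Finset.univ.filter fun A : Finset (Fin n) => IsSplitDatum k A μ).card +
      (∑ j ∈ Finset.range (μ + 1), n.choose j + ∑ j ∈ Finset.range (k - μ + 1), n.choose j) =
        2 ^ n := by
  obtain ⟨h1, h2⟩ := Finset.mem_Ico.1 hμ
  have hcard : ∀ A : Finset (Fin n), A.card + Aᶜ.card = n := fun A => by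
    rw [Finset.card_add_card_compl, Fintype.card_fin]
  have hnot : (Finset.univ.filter fun A : Finset (Fin n) => ¬IsSplitDatum k A μ) =
      Finset.univ.filter (fun A => A.card ≤ μ) ∪
        Finset.univ.filter (fun A => Aᶜ.card ≤ k - μ) := by
    rw [← Finset.filter_or]
    refine Finset.filter_congr fun A _ => ?_
    rw [IsSplitDatum]
    lia
  have hdisj : Disjoint (Finset.univ.filter fun A : Finset (Fin n) => A.card ≤ μ)
      (Finset.univ.filter fun A => Aᶜ.card ≤ k - μ) := by
    refine Finset.disjoint_filter.2 fun A _ hA hA' => ?_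
    have := hcard A
    lia
  have hle := card_filter_card_le (Fin n) μ
  have hcompl := card_filter_card_compl_le (Fin n) (k - μ)
  rw [Fintype.card_fin] at hle hcompl
  rw [← hle, ← hcompl, ← Finset.card_union_of_disjoint hdisj, ← hnot,
    Finset.card_filter_add_card_filter_not, Finset.card_univ, Fintype.card_finset,
    Fintype.card_fin]

theorem card_splitData_add (hkn : k < n) :
    (splitData k n).card + 2 * ∑ μ ∈ Finset.Ico 1 k, ∑ j ∈ Finset.range (μ + 1), n.choose j =
      (k - 1) * 2 ^ n := by
  have hrefl : ∑ μ ∈ Finset.Ico 1 k, ∑ j ∈ Finset.range (k - μ + 1), n.choose j =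
      ∑ μ ∈ Finset.Ico 1 k, ∑ j ∈ Finset.range (μ + 1), n.choose j := by
    refine Finset.sum_nbij' (fun μ => k - μ) (fun μ => k - μ) ?_ ?_ ?_ ?_ fun _ _ => rfl
    all_goals
      intro μ hμ
      rw [Finset.mem_Ico] at *
      lia
  have hcard : (splitData k n).card = ∑ μ ∈ Finset.Ico 1 k,
      (Finset.univ.filter fun A : Finset (Fin n) => IsSplitDatum k A μ).card := by
    rw [splitData, Finset.card_filter, Finset.sum_product_right]
    simp only [Finset.card_filter]
  have hsum := Finset.sum_congr rfl fun μ hμ => card_filter_isSplitDatum_add hkn (μ := μ) hμ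
  rw [Finset.sum_add_distrib, Finset.sum_add_distrib, hrefl, ← hcard, ← two_mul] at hsum
  rw [hsum, Finset.sum_const, Nat.card_Ico, smul_eq_mul]

theorem sum_range_sum_range_succ {R : Type*} [CommRing R] (f : ℕ → R) (k : ℕ) :
    ∑ μ ∈ Finset.range k, ∑ j ∈ Finset.range (μ + 1), f j =
      ∑ j ∈ Finset.range k, (k - j) * f j := by
  induction k with
  | zero => rfl
  | succ k ih =>
    rw [Finset.sum_range_succ, ih, Finset.sum_range_succ f, Finset.sum_range_succ, ← add_assoc,
      ← Finset.sum_add_distrib]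
    push_cast
    congr 1
    · exact Finset.sum_congr rfl fun j _ => by ring
    · ring

theorem sum_Ico_sum_range_choose (n : ℕ) (hk : 0 < k) :
    ∑ μ ∈ Finset.Ico 1 k, ∑ j ∈ Finset.range (μ + 1), (n.choose j : ℤ) =
      (k - 1) * (n + 1) + ∑ i ∈ Finset.Icc 2 (k - 1), ((k : ℤ) - i) * n.choose i := by
  have h := sum_range_sum_range_succ (fun j => (n.choose j : ℤ)) k
  obtain rfl | hk1 := (Nat.one_le_iff_ne_zero.2 hk.ne').eq_or_lt
  · simp
  have hIcc : Finset.Icc 2 (k - 1) = Finset.Ico 2 k := by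
    ext i
    simp only [Finset.mem_Icc, Finset.mem_Ico]
    lia
  rw [Finset.sum_range_eq_add_Ico _ hk, Finset.sum_range_eq_add_Ico _ hk,
    Finset.sum_eq_sum_Ico_succ_bot hk1 fun j => ((k : ℤ) - j) * n.choose j] at h
  simp only [zero_add, one_add_one_eq_two, Finset.sum_range_one, Nat.choose_zero_right,
    Nat.choose_one_right, Nat.cast_zero, Nat.cast_one, sub_zero, mul_one] at h
  rw [hIcc]
  linarith

end Counting

theorem card_splits_hypersimplex_general (k n : ℕ) (hk : 0 < k) (hkn : k < n) :
    ({S : Set (Set (Fin n → ℝ)) | IsSplit (hypersimplex k n) S}.ncard : ℤ) =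
      ((k : ℤ) - 1) * (2 ^ (n - 1) - ((n : ℤ) + 1)) -
        ∑ i ∈ Finset.Icc 2 (k - 1), ((k : ℤ) - (i : ℤ)) * (n.choose i : ℤ) := by
  have hpos : 0 < n := hk.trans hkn
  have hcount := card_splitData_add hkn
  rw [← two_mul_ncard_setOf_isSplit_hypersimplex k hpos] at hcount
  have hpow : (2 : ℤ) ^ n = 2 * 2 ^ (n - 1) := (mul_pow_sub_one hpos.ne' 2).symm
  have hsum := sum_Ico_sum_range_choose n hk
  zify [hk] at hcount
  rw [hsum, hpow] at hcount
  linarith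

/-- For `n ≥ 2k`, the number of splits of the hypersimplex `Δ(k,n)` equals
`(k−1)(2^{n−1} − (n+1)) − Σ_{i=2}^{k−1} (k−i)·C(n,i)`. -/
theorem card_splits_hypersimplex (k n : ℕ) (hk : 0 < k) (hn : 2 * k ≤ n) (hkn : k < n) :
    ({S : Set (Set (Fin n → ℝ)) | IsSplit (hypersimplex k n) S}.ncard : ℤ) =
      ((k : ℤ) - 1) * (2 ^ (n - 1) - ((n : ℤ) + 1)) -
        ∑ i ∈ Finset.Icc 2 (k - 1), ((k : ℤ) - (i : ℤ)) * (n.choose i : ℤ) :=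
  card_splits_hypersimplex_general k n hk hkn
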